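/- Let M be a nontrivial pre-Riesz monoid satisfying Conrad's F-condition: for every strictly positive x ∈ M, every set of pairwise disjoint strictly positive elements all ≤ x is finite. Then M has a basis. -/

import Mathlib

variable {M : Type*} [AddCommMonoid M] [PartialOrder M]

/-- `h` is homogeneous: `h` is strictly positive and any two strictly positive
elements below `h` have a common strictly positive lower bound. -/
def Homog (h : M) : Prop :=
  0 < h ∧ ∀ r s : M, 0 < r → r ≤ h → 0 < s → s ≤ h → ∃ t : M, 0 < t ∧ t ≤ r ∧ t ≤ s

/-- `x` and `y` are disjoint: no strictly positive common lower bound. -/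
def Disj (x y : M) : Prop := ¬ ∃ r : M, 0 < r ∧ r ≤ x ∧ r ≤ y

/-- A disjoint set: a set of pairwise disjoint strictly positive elements. -/
def DisjSet (S : Set M) : Prop :=
  (∀ x ∈ S, 0 < x) ∧ ∀ x ∈ S, ∀ y ∈ S, x ≠ y → Disj x y

/-- A basis: a disjoint set, maximal under inclusion among disjoint sets, all of whose
elements are homogeneous. -/
def IsBasisSet (S : Set M) : Prop :=
  DisjSet S ∧ (∀ T : Set M, DisjSet T → S ⊆ T → T = S) ∧ ∀ x ∈ S, Homog x

/-- A pre-Riesz monoid: upper directed, and every finite family of strictly positive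
elements either has `0` as a greatest lower bound or admits a strictly positive
common lower bound. -/
def PreRiesz (M : Type*) [AddCommMonoid M] [PartialOrder M] : Prop :=
  (∀ a b : M, ∃ c : M, a ≤ c ∧ b ≤ c) ∧
  ∀ s : Finset M, s.Nonempty → (∀ x ∈ s, 0 < x) →
    IsGLB (↑s : Set M) (0 : M) ∨ ∃ r : M, 0 < r ∧ ∀ x ∈ s, r ≤ x

/-! Call a strictly positive `s ≤ x` a split part of `x` if something strictly positive below `x` is
disjoint from `s`. The strictly positive elements without split parts are the homogeneous ones, and
along a chain of successive split parts the elements split off are pairwise disjoint. The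
F-condition therefore makes the relation well-founded, so every strictly positive element dominates
a homogeneous one. Then any maximal disjoint set of homogeneous elements is already maximal among
all disjoint sets. -/

open Set Function

theorem Disj.symm {x y : M} (h : Disj x y) : Disj y x :=
  fun ⟨r, hr, hry, hrx⟩ => h ⟨r, hr, hrx, hry⟩

instance Disj.instStdSymm : Std.Symm (Disj : M → M → Prop) :=
  ⟨fun _ _ => Disj.symm⟩

theorem Disj.mono {x x' y y' : M} (hx : x' ≤ x) (hy : y' ≤ y) (h : Disj x y) : Disj x' y' :=
  fun ⟨r, hr, hrx, hry⟩ => h ⟨r, hr, hrx.trans hx, hry.trans hy⟩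

theorem Disj.ne {x y : M} (h : Disj x y) (hx : 0 < x) : x ≠ y :=
  fun hxy => h ⟨x, hx, le_rfl, hxy.le⟩

theorem disjSet_iff_pairwise {S : Set M} : DisjSet S ↔ (∀ x ∈ S, 0 < x) ∧ S.Pairwise Disj :=
  Iff.rfl

theorem DisjSet.sUnion {c : Set (Set M)} (hc : DirectedOn (· ⊆ ·) c) (h : ∀ S ∈ c, DisjSet S) :
    DisjSet (⋃₀ c) :=
  disjSet_iff_pairwise.2 ⟨fun x ⟨S, hS, hx⟩ => (h S hS).1 x hx,
    (pairwise_sUnion hc).2 fun S hS => (disjSet_iff_pairwise.1 (h S hS)).2⟩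

theorem DisjSet.insert {S : Set M} {a : M} (hS : DisjSet S) (ha : 0 < a)
    (hdisj : ∀ y ∈ S, Disj a y) : DisjSet (insert a S) :=
  disjSet_iff_pairwise.2 ⟨forall_mem_insert.2 ⟨ha, hS.1⟩,
    (disjSet_iff_pairwise.1 hS).2.insert_of_symm fun y hy _ => hdisj y hy⟩

theorem DisjSet.range {ι : Type*} {f : ι → M} (hpos : ∀ i, 0 < f i)
    (hdisj : Pairwise (Disj on f)) : DisjSet (range f) :=
  disjSet_iff_pairwise.2 ⟨forall_mem_range.2 hpos, hdisj.range_pairwise⟩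

theorem injective_of_pairwise_disj {ι : Type*} {f : ι → M} (hpos : ∀ i, 0 < f i)
    (hdisj : Pairwise (Disj on f)) : Injective f :=
  injective_iff_pairwise_ne.2 (hdisj.mono fun i _ hij => hij.ne (hpos i))

theorem pairwise_disj_of_antitone {f r : ℕ → M} (hf : Antitone f) (hrf : ∀ n, r n ≤ f n)
    (hdisj : ∀ n, Disj (r n) (f (n + 1))) : Pairwise (Disj on r) :=
  (Std.Symm.pairwise_on r).2 fun m n hmn =>
    (hdisj m).mono le_rfl ((hrf n).trans (hf (Nat.succ_le_of_lt hmn)))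

/-- `s` is a split part of `x`: a strictly positive element below `x` that is disjoint from some
other strictly positive element below `x`. One descends along this relation, with `s` in the role of
the smaller element, to reach a homogeneous element. -/
def IsSplitPart (s x : M) : Prop :=
  0 < s ∧ s ≤ x ∧ ∃ r : M, 0 < r ∧ r ≤ x ∧ Disj r s

theorem homog_iff_forall_not_isSplitPart {x : M} :
    Homog x ↔ 0 < x ∧ ∀ s, ¬ IsSplitPart s x := by
  refine and_congr_right fun _ => ⟨?_, ?_⟩
  · rintro h s ⟨hs, hsx, r, hr, hrx, hrs⟩
    exact hrs (h r s hr hrx hs hsx)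
  · intro h r s hr hrx hs hsx
    by_contra hrs
    exact h s ⟨hs, hsx, r, hr, hrx, hrs⟩

theorem acc_isSplitPart_of_finite {x : M}
    (hfin : ∀ S : Set M, DisjSet S → S ⊆ Iic x → S.Finite) : Acc IsSplitPart x := by
  rw [acc_iff_isEmpty_descending_chain]
  refine ⟨fun ⟨f, hf0, hf⟩ => ?_⟩
  choose r hr hrf hdisj using fun n => (hf n).2.2
  have hanti : Antitone f := antitone_nat_of_succ_le fun n => (hf n).2.1
  have hpair : Pairwise (Disj on r) := pairwise_disj_of_antitone hanti hrf hdisj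
  have hrx : range r ⊆ Iic x :=
    range_subset_iff.2 fun n => (hrf n).trans ((hanti n.zero_le).trans hf0.le)
  exact infinite_range_of_injective (injective_of_pairwise_disj hr hpair)
    (hfin _ (DisjSet.range hr hpair) hrx)

theorem exists_homog_le_of_acc {x : M} (hacc : Acc IsSplitPart x) (hx : 0 < x) :
    ∃ h, Homog h ∧ h ≤ x := by
  induction hacc with
  | intro x _ ih =>
    by_cases hsplit : ∃ s, IsSplitPart s x
    · obtain ⟨s, hs⟩ := hsplit
      obtain ⟨h, hh, hhs⟩ := ih s hs hs.1
      exact ⟨h, hh, hhs.trans hs.2.1⟩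
    · exact ⟨x, homog_iff_forall_not_isSplitPart.2 ⟨hx, not_exists.1 hsplit⟩, le_rfl⟩

theorem exists_maximal_disjSet_subset (A : Set M) :
    ∃ S, Maximal (fun S : Set M => DisjSet S ∧ S ⊆ A) S :=
  zorn_subset {S | DisjSet S ∧ S ⊆ A} fun c hc hchain =>
    ⟨⋃₀ c, ⟨DisjSet.sUnion hchain.directedOn fun _ hS => (hc hS).1,
      sUnion_subset fun _ hS => (hc hS).2⟩, fun _ => subset_sUnion_of_mem⟩

theorem maximal_disjSet_of_maximal_subset {A S : Set M}
    (hA : ∀ x : M, 0 < x → ∃ a ∈ A, 0 < a ∧ a ≤ x)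
    (hS : Maximal (fun S : Set M => DisjSet S ∧ S ⊆ A) S) : Maximal DisjSet S := by
  refine ⟨hS.prop.1, fun T hT hST t ht => ?_⟩
  by_contra htS
  obtain ⟨a, haA, ha, hat⟩ := hA t (hT.1 t ht)
  have hdisj : ∀ y ∈ S, Disj a y := fun y hy =>
    (hT.2 t ht y (hST hy) (ne_of_mem_of_not_mem hy htS).symm).mono hat le_rfl
  have haS : a ∈ S :=
    hS.le_of_ge ⟨hS.prop.1.insert ha hdisj, insert_subset haA hS.prop.2⟩
      (subset_insert a S) (mem_insert a S)
  exact (hdisj a haS).ne ha rfl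

theorem exists_isBasisSet_of_forall_exists_homog_le
    (h : ∀ x : M, 0 < x → ∃ a, Homog a ∧ a ≤ x) : ∃ S : Set M, IsBasisSet S := by
  obtain ⟨S, hS⟩ := exists_maximal_disjSet_subset {a : M | Homog a}
  have hmax : Maximal DisjSet S := maximal_disjSet_of_maximal_subset
    (fun x hx => (h x hx).imp fun _ ⟨ha, hax⟩ => ⟨ha, ha.1, hax⟩) hS
  exact ⟨S, hmax.prop, fun _ hT hST => (hmax.eq_of_subset hT hST).symm, hS.prop.2⟩

theorem stmt_12_general
    (hF : ∀ x : M, 0 < x → ∀ S : Set M, (∀ y ∈ S, 0 < y ∧ y ≤ x) →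
      (∀ y ∈ S, ∀ z ∈ S, y ≠ z → Disj y z) → S.Finite) :
    ∃ S : Set M, IsBasisSet S := by
  refine exists_isBasisSet_of_forall_exists_homog_le fun x hx =>
    exists_homog_le_of_acc (acc_isSplitPart_of_finite fun S hS hSx => ?_) hx
  exact hF x hx S (fun y hy => ⟨hS.1 y hy, hSx hy⟩) hS.2

theorem stmt_12 {M : Type*} [AddCommMonoid M] [PartialOrder M]
    (hcomp : ∀ a b c : M, a ≤ b → a + c ≤ b + c) (hbot : ∀ x : M, 0 ≤ x)
    (hnt : ∃ x : M, 0 < x) (hpR : PreRiesz M)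
    (hF : ∀ x : M, 0 < x → ∀ S : Set M, (∀ y ∈ S, 0 < y ∧ y ≤ x) →
      (∀ y ∈ S, ∀ z ∈ S, y ≠ z → Disj y z) → S.Finite) :
    ∃ S : Set M, IsBasisSet S :=
  stmt_12_general hF
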